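/- If c ∈ K_0 with v_0(c) ≥ d_0 − d_j, and 0 ≤ j, r < p^2 with j + r < p^2, then c·Ψ^{(j)}·ρ_r ≡ c·π_0^{d_{j+r} − d_r}·ρ_{j+r} mod 𝔐_2^{p^2·e_0 − p·b_2 − (p^2−p+1)·b_1}; equality holds when there is no carry in adding the p-adic expansions of j and r. -/

import Mathlib

/-- A normalized discrete valuation on a field `K`, recorded as a function
`v : K → ℤ`.  The value of `v` at `0` is irrelevant: all conditions below only
refer to nonzero elements (the convention `v 0 = ∞` being understood). -/
structure IsDiscVal {K : Type*} [Field K] (v : K → ℤ) : Prop where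
  map_one : v 1 = 0
  map_mul : ∀ x y : K, x ≠ 0 → y ≠ 0 → v (x * y) = v x + v y
  min_le_add : ∀ x y : K, x ≠ 0 → y ≠ 0 → x + y ≠ 0 → min (v x) (v y) ≤ v (x + y)
  exists_uniformizer : ∃ π : K, π ≠ 0 ∧ v π = 1

/-!
Witt vector addition gives `(x₂ - μ x₁) ^ p = -μ ^ p x₁ + ⋯` with a remainder of larger valuation,
so `X = x₂ - μ x₁` has valuation `-b₂`, which is prime to `p`. Hence the `X ^ i` with `i < p ^ 2`
have valuations that are distinct modulo `p ^ 2`, and how far a `K₀`-linear operator shifts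
valuations can be read off from its action on them. The Witt vector corrections telescope along
the orbit of `σ`, so `σ ^ p` moves `X` only by an integral amount, which says that
`Ψ₂ = σ ^ p - 1` raises valuations by `b₂`. Writing `Ψ₁ + 1 = σ (1 + Ψ₂ H)`, the Frobenius
congruence `(1 + T) ^ p ≡ 1 + T ^ p` and `(1 + Ψ₂) ^ p = 1` yield `Ψ₁ ^ p ≡ Ψ₂`. Finally
`Ψ^(j) Ψ^(r) = Ψ^(j + r)` when the digits add without carry, and otherwise the two sides differ by
one replacement of `Ψ₁ ^ p` by `Ψ₂`.
-/

section Filtration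

variable {R : Type*} [Ring R] {𝓕 : ℤ → AddSubgroup R} [SetLike.GradedMonoid 𝓕]

theorem exists_add_pow_prime_eq_of_mem (h𝓕 : Antitone 𝓕) {p : ℕ} (hp : p.Prime) {x y : R}
    (hxy : Commute x y) {a b l : ℤ} (hx : x ∈ 𝓕 a) (hy : y ∈ 𝓕 b) (hl₁ : l ≤ a + (p - 1) * b)
    (hl₂ : l ≤ (p - 1) * a + b) : ∃ s ∈ 𝓕 l, (x + y) ^ p = x ^ p + y ^ p + p * s := by
  refine ⟨_, sum_mem fun k hk => ?_, hxy.add_pow_prime_eq' hp⟩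
  rw [Finset.mem_Ioo] at hk
  have hterm := SetLike.mul_mem_graded (SetLike.mul_mem_graded (SetLike.pow_mem_graded k hx)
    (SetLike.pow_mem_graded (p - k) hy)) (SetLike.natCast_mem_graded 𝓕 (p.choose k / p))
  refine h𝓕 ?_ hterm
  have hconvex : l ≤ k * a + (p - k) * b := by
    rcases le_total a b with hab | hab
    · nlinarith [mul_nonneg (by omega : (0 : ℤ) ≤ p - 1 - k) (sub_nonneg.2 hab)]
    · nlinarith [mul_nonneg (by omega : (0 : ℤ) ≤ k - 1) (sub_nonneg.2 hab)]
  rw [nsmul_eq_mul, nsmul_eq_mul, Nat.cast_sub hk.2.le]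
  linarith

theorem one_add_pow_prime_sub_mem (h𝓕 : Antitone 𝓕) {p : ℕ} (hp : p.Prime) {e g : ℤ}
    (hpe : (p : R) ∈ 𝓕 e) {T : R} (hT : T ∈ 𝓕 g) (hg : 0 ≤ g) :
    (1 + T) ^ p - 1 - T ^ p ∈ 𝓕 (e + g) := by
  have hp1 : (1 : ℤ) ≤ p - 1 := by have := hp.two_le; omega
  obtain ⟨s, hs, hsum⟩ := exists_add_pow_prime_eq_of_mem h𝓕 hp (Commute.one_left T) (l := g)
    (SetLike.one_mem_graded 𝓕) hT (by nlinarith) (by simp)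
  rw [hsum, one_pow, add_assoc, add_sub_cancel_left, add_sub_cancel_left]
  exact SetLike.mul_mem_graded hpe hs

theorem pow_prime_mem_of_one_add_pow_eq_one (h𝓕 : Antitone 𝓕) {p : ℕ} (hp : p.Prime) {e g : ℤ}
    (hpe : (p : R) ∈ 𝓕 e) {T : R} (hT : T ∈ 𝓕 g) (hg : 0 ≤ g) (hroot : (1 + T) ^ p = 1) :
    T ^ p ∈ 𝓕 (e + g) := by
  simpa [hroot] using one_add_pow_prime_sub_mem h𝓕 hp hpe hT hg

theorem twisted_sub_one_pow_prime_sub_mem (h𝓕 : Antitone 𝓕) {p : ℕ} (hp : p.Prime) {e b M : ℤ}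
    (hpe : (p : R) ∈ 𝓕 e) (hb : 0 ≤ b) (hM : 0 ≤ M) (hbM : b ≤ (p - 1) * M) {σ H : R}
    (hσ : σ ∈ 𝓕 0) (hσp : σ ^ p ^ 2 = 1) (hΨ₂ : σ ^ p - 1 ∈ 𝓕 (M + b)) (hH : H ∈ 𝓕 (-M))
    (hσH : Commute σ H) :
    σ * (1 + (σ ^ p - 1) * H) - 1 ∈ 𝓕 0 ∧
      (σ * (1 + (σ ^ p - 1) * H) - 1) ^ p - (σ ^ p - 1) ∈ 𝓕 (e + b - (p - 1) * M) := by
  set Ψ₂ := σ ^ p - 1 with hΨ₂_def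
  set Ψ₁ := σ * (1 + Ψ₂ * H) - 1 with hΨ₁_def
  have hσΨ₂ : Commute σ Ψ₂ :=
    ((Commute.refl σ).pow_right p).sub_right (Commute.one_right σ)
  have hΨ₂H : Commute Ψ₂ H := (hσH.pow_left p).sub_left (Commute.one_left H)
  have hV : Ψ₂ * H ∈ 𝓕 0 := h𝓕 (by omega) (SetLike.mul_mem_graded hΨ₂ hH)
  have hΨ₁ : Ψ₁ ∈ 𝓕 0 := sub_mem
    (h𝓕 (by omega) (SetLike.mul_mem_graded hσ (add_mem (SetLike.one_mem_graded 𝓕) hV)))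
    (SetLike.one_mem_graded 𝓕)
  have hΨ₂p : Ψ₂ ^ p ∈ 𝓕 (e + (M + b)) :=
    pow_prime_mem_of_one_add_pow_eq_one h𝓕 hp hpe hΨ₂ (by omega)
      (by rw [hΨ₂_def, add_sub_cancel, ← pow_mul, ← sq, hσp])
  have hVp : (Ψ₂ * H) ^ p ∈ 𝓕 (e + b - (p - 1) * M) := by
    rw [hΨ₂H.mul_pow]
    refine h𝓕 ?_ (SetLike.mul_mem_graded hΨ₂p (SetLike.pow_mem_graded p hH))
    rw [nsmul_eq_mul]
    linarith
  have hΨ₁_add_one : (1 + Ψ₁) ^ p = σ ^ p * (1 + Ψ₂ * H) ^ p := by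
    rw [hΨ₁_def, add_sub_cancel,
      ((Commute.one_right σ).add_right (hσΨ₂.mul_right hσH)).mul_pow]
  have hexpand : Ψ₁ ^ p - Ψ₂ =
      σ ^ p * (((1 + Ψ₂ * H) ^ p - 1 - (Ψ₂ * H) ^ p) + (Ψ₂ * H) ^ p) -
        ((1 + Ψ₁) ^ p - 1 - Ψ₁ ^ p) := by
    rw [hΨ₁_add_one, hΨ₂_def, sub_add_cancel, mul_sub, mul_one]
    abel
  refine ⟨hΨ₁, ?_⟩
  rw [hexpand]
  have hV_frob := one_add_pow_prime_sub_mem h𝓕 hp hpe hV le_rfl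
  have hΨ₁_frob := one_add_pow_prime_sub_mem h𝓕 hp hpe hΨ₁ le_rfl
  refine sub_mem (h𝓕 ?_ (SetLike.mul_mem_graded (SetLike.pow_mem_graded p hσ)
    (add_mem (h𝓕 ?_ hV_frob) hVp))) (h𝓕 ?_ hΨ₁_frob)
  · simp
  all_goals linarith

end Filtration

section Digits

variable {R : Type*} [Ring R] {p j r : ℕ} {S T : R}

/-- The monomial `S ^ a₁ * T ^ a₀` attached to the base-`p` expansion `a = a₀ + p * a₁`: for
`a < p ^ 2` the scaffold operator `Ψ^(a)` is `digitMonomial p Ψ₂ Ψ₁ a`. -/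
def digitMonomial (p : ℕ) (S T : R) (a : ℕ) : R :=
  S ^ (a / p) * T ^ (a % p)

theorem digitMonomial_mul (hTS : Commute T S) :
    digitMonomial p S T j * digitMonomial p S T r = S ^ (j / p + r / p) * T ^ (j % p + r % p) := by
  simp only [digitMonomial, pow_add]
  exact (hTS.pow_pow _ _).mul_mul_mul_comm _ _

theorem digitMonomial_mul_of_no_carry (hTS : Commute T S) (hjr : j % p + r % p < p) :
    digitMonomial p S T j * digitMonomial p S T r = digitMonomial p S T (j + r) := by
  rw [digitMonomial_mul hTS, digitMonomial, Nat.add_div (by omega), if_neg hjr.not_ge, add_zero,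
    Nat.add_mod_of_add_mod_lt hjr]

theorem digitMonomial_mul_sub_of_carry (hp : 0 < p) (hTS : Commute T S)
    (hjr : p ≤ j % p + r % p) :
    digitMonomial p S T j * digitMonomial p S T r - digitMonomial p S T (j + r) =
      S ^ (j / p + r / p) * (T ^ p - S) * T ^ ((j + r) % p) := by
  rw [digitMonomial_mul hTS, digitMonomial, Nat.add_div hp, if_pos hjr,
    ← Nat.add_mod_add_of_le_add_mod hjr, add_comm _ p, pow_add T, pow_succ]
  noncomm_ring

theorem digitMonomial_mul_sub_mem {𝓕 : ℤ → AddSubgroup R} [SetLike.GradedMonoid 𝓕] {s g : ℤ}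
    (hp : 0 < p) (hTS : Commute T S) (hS : S ∈ 𝓕 s) (hT : T ∈ 𝓕 0) (hg : T ^ p - S ∈ 𝓕 g)
    (hjr : p ≤ j % p + r % p) :
    digitMonomial p S T j * digitMonomial p S T r - digitMonomial p S T (j + r) ∈
      𝓕 ((j / p + r / p : ℕ) * s + g) := by
  rw [digitMonomial_mul_sub_of_carry hp hTS hjr]
  simpa using SetLike.mul_mem_graded (SetLike.mul_mem_graded
    (SetLike.pow_mem_graded (j / p + r / p) hS) hg) (SetLike.pow_mem_graded ((j + r) % p) hT)

end Digits

section Valuation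

variable {K : Type*} [Field K] {w : AddValuation K (WithTop ℤ)}

/-- The fractional ideal `𝔐ⁿ` of the elements of valuation at least `n`. -/
def valBall (w : AddValuation K (WithTop ℤ)) (n : ℤ) : AddSubgroup K where
  carrier := {x | n ≤ w x}
  zero_mem' := by simp
  add_mem' hx hy := w.map_le_add hx hy
  neg_mem' hx := by simpa using hx

theorem mem_valBall {n : ℤ} {x : K} : x ∈ valBall w n ↔ n ≤ w x :=
  Iff.rfl

theorem valBall_antitone (w : AddValuation K (WithTop ℤ)) : Antitone (valBall w) :=
  fun _ _ hmn _ hx => (WithTop.coe_le_coe.2 hmn).trans hx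

instance : SetLike.GradedMonoid (valBall w) where
  one_mem := by simp [mem_valBall]
  mul_mem m n x y hx hy := by
    rw [mem_valBall, WithTop.coe_add, w.map_mul]
    exact add_le_add hx hy

theorem exists_addVal_eq {x : K} (hx : x ≠ 0) : ∃ n : ℤ, w x = n :=
  WithTop.ne_top_iff_exists.1 (w.ne_top_iff.2 hx) |>.imp fun _ => Eq.symm

theorem addVal_pow_eq {x : K} {k : ℤ} (hx : w x = k) (n : ℕ) : w (x ^ n) = (n * k : ℤ) := by
  rw [w.map_pow, hx, ← WithTop.coe_nsmul, nsmul_eq_mul]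

theorem addVal_eq_of_pow_eq {x : K} {k : ℤ} {n : ℕ} (hn : n ≠ 0) (hx : w (x ^ n) = (n * k : ℤ)) :
    w x = k := by
  have hx0 : x ≠ 0 := by
    rintro rfl
    rw [zero_pow hn, w.map_zero] at hx
    exact WithTop.top_ne_coe hx
  obtain ⟨l, hl⟩ := exists_addVal_eq (w := w) hx0
  rw [addVal_pow_eq hl, WithTop.coe_inj] at hx
  rw [hl, mul_left_cancel₀ (Nat.cast_ne_zero.2 hn) hx]

theorem addVal_inv_eq {x : K} {k : ℤ} (hx : w x = k) : w x⁻¹ = (-k : ℤ) := by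
  rw [w.map_inv, hx]
  rfl

theorem addVal_zpow_eq {x : K} {k : ℤ} (hx : w x = k) (n : ℤ) : w (x ^ n) = (n * k : ℤ) := by
  obtain ⟨n, rfl | rfl⟩ := n.eq_nat_or_neg
  · rw [zpow_natCast, addVal_pow_eq hx]
  · rw [zpow_neg, zpow_natCast, addVal_inv_eq (addVal_pow_eq hx n), neg_mul]

theorem div_mem_valBall {x y : K} {m n : ℤ} (hx : x ∈ valBall w m) (hy : w y = n) :
    x / y ∈ valBall w (m - n) := by
  rw [div_eq_mul_inv, sub_eq_add_neg]
  exact SetLike.mul_mem_graded hx (mem_valBall.2 (addVal_inv_eq hy).ge)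

theorem addVal_natCast_eq_zero_of_coprime {m n : ℕ} (hm : 0 < w (m : K)) (hmn : m.Coprime n) :
    w (n : K) = 0 := by
  refine le_antisymm ?_ (SetLike.natCast_mem_graded (valBall w) n)
  by_contra! hn
  have hbezout : (m : K) * (m.gcdA n : ℤ) + n * (m.gcdB n : ℤ) = 1 := by
    have h := Nat.gcd_eq_gcd_ab m n
    rw [hmn] at h
    exact_mod_cast congrArg (Int.cast (R := K)) h.symm
  have hint (l : ℤ) : 0 ≤ w (l : K) := SetLike.intCast_mem_graded (valBall w) l
  have hpos : 0 < w (1 : K) := by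
    rw [← hbezout]
    refine w.map_lt_add ?_ ?_ <;> rw [w.map_mul]
    · exact add_pos_of_pos_of_nonneg hm (hint _)
    · exact add_pos_of_pos_of_nonneg hn (hint _)
  simp at hpos

theorem addVal_sum_eq_inf {ι : Type*} {s : Finset ι} {f : ι → K}
    (hf : ∀ i ∈ s, ∀ j ∈ s, i ≠ j → w (f i) = w (f j) → f i = 0) :
    w (∑ i ∈ s, f i) = s.inf fun i => w (f i) := by
  classical
  induction s using Finset.induction_on with
  | empty => simp
  | insert k s hk ih =>
    rw [Finset.sum_insert hk, Finset.inf_insert]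
    specialize ih fun i hi j hj =>
      hf i (Finset.mem_insert_of_mem hi) j (Finset.mem_insert_of_mem hj)
    rw [← ih]
    rcases eq_or_ne (w (f k)) (w (∑ i ∈ s, f i)) with heq | hne
    · rcases s.eq_empty_or_nonempty with rfl | hs
      · simp
      obtain ⟨i, hi, hmin⟩ := s.exists_mem_eq_inf hs fun i => w (f i)
      have hik : i ≠ k := fun h => hk (h ▸ hi)
      have hfk : f k = 0 := hf k (s.mem_insert_self k) i (Finset.mem_insert_of_mem hi) hik.symm
        (by rw [heq, ih, hmin])
      simp [hfk]
    · exact w.map_add_of_distinct_val hne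

theorem addVal_pow_sub_self_eq {x : K} {k : ℤ} {n : ℕ} (hn : 2 ≤ n) (hx : w x = k) (hk : k < 0) :
    w (x ^ n - x) = (n * k : ℤ) := by
  have hpow := addVal_pow_eq hx n
  rw [w.map_sub_eq_of_lt_left, hpow]
  rw [hpow, hx, WithTop.coe_lt_coe]
  nlinarith [(mod_cast hn : (2 : ℤ) ≤ n)]

theorem mem_valBall_of_pow_sub_self_mem {x : K} {k : ℤ} {n : ℕ} (hn : 2 ≤ n) (hk : 0 ≤ k)
    (hx : x ^ n - x ∈ valBall w (-(n * k))) : x ∈ valBall w (-k) := by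
  by_contra! hlt
  rw [mem_valBall, not_le] at hlt
  obtain ⟨l, hl⟩ := exists_addVal_eq (w.ne_top_iff.1 hlt.ne_top)
  rw [hl, WithTop.coe_lt_coe] at hlt
  rw [mem_valBall, addVal_pow_sub_self_eq hn hl (by omega), WithTop.coe_le_coe] at hx
  nlinarith

theorem addVal_eq_of_pow_sub_self_eq {x : K} {k : ℤ} {n : ℕ} (hn : 2 ≤ n) (hk : k < 0)
    (hx : w (x ^ n - x) = (n * k : ℤ)) : w x = k := by
  have hneg : w x < 0 := by
    by_contra! hnonneg
    have hint : x ∈ valBall w 0 := hnonneg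
    have := sub_mem (SetLike.pow_mem_graded n hint) (valBall_antitone w (by simp) hint)
    rw [smul_zero, mem_valBall, hx, WithTop.coe_le_coe] at this
    nlinarith
  obtain ⟨l, hl⟩ := exists_addVal_eq (w.ne_top_iff.1 hneg.ne_top)
  rw [hl] at hneg
  rw [addVal_pow_sub_self_eq hn hl (WithTop.coe_lt_coe.1 hneg), WithTop.coe_inj] at hx
  rw [hl, mul_left_cancel₀ (by omega) hx]

end Valuation

section Witt

variable {K : Type*} [Field K] {w : AddValuation K (WithTop ℤ)} {p : ℕ}

/-- The polynomial `D(X, Y) = (X^p + Y^p - (X + Y)^p) / p` of the addition law of Witt vectors of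
length two. -/
def wittD (p : ℕ) (x y : K) : K :=
  (x ^ p + y ^ p - (x + y) ^ p) / p

variable [CharZero K]

theorem add_pow_eq_sub_mul_wittD (hp : p ≠ 0) (x y : K) :
    (x + y) ^ p = x ^ p + y ^ p - p * wittD p x y := by
  have hpK : (p : K) ≠ 0 := Nat.cast_ne_zero.2 hp
  rw [wittD, mul_div_cancel₀ _ hpK]
  ring

theorem wittD_mem_valBall (hp : p.Prime) {x y : K} {a b l : ℤ} (hx : x ∈ valBall w a)
    (hy : y ∈ valBall w b) (hl₁ : l ≤ a + (p - 1) * b) (hl₂ : l ≤ (p - 1) * a + b) :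
    wittD p x y ∈ valBall w l := by
  obtain ⟨s, hs, hsum⟩ := exists_add_pow_prime_eq_of_mem (valBall_antitone w) hp
    (Commute.all x y) hx hy hl₁ hl₂
  have hpK : (p : K) ≠ 0 := Nat.cast_ne_zero.2 hp.ne_zero
  have hD : wittD p x y = -s := by
    rw [wittD, hsum]
    field_simp
    ring
  rw [hD]
  exact neg_mem hs

theorem wittD_artinSchreier_mem_valBall (hp : p.Prime) {A x₁ : K} {b : ℤ} (hb : 0 ≤ b)
    (hx₁ : x₁ ∈ valBall w (-(p * b))) (hA : A ∈ valBall w (-(p ^ 2 * b))) :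
    wittD p x₁ A ∈ valBall w (-(p * b + (p - 1) * p ^ 2 * b)) := by
  have hp2 : (0 : ℤ) ≤ p - 2 := by have := hp.two_le; omega
  have hp1 : (0 : ℤ) ≤ p - 1 := by omega
  have hgap : 0 ≤ p * (p - 1) * (p - 2) * b := by positivity
  exact wittD_mem_valBall hp hx₁ hA (by linarith) (by linarith)

theorem witt_root_mem_valBall (hp : p.Prime) {A μ x₁ x₂ : K} {b M : ℤ} (hb : 0 < b)
    (hbM : p * (p - 1) * b < M) (hA : A ∈ valBall w (-(p ^ 2 * b))) (hμ : μ ∈ valBall w (-M))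
    (hx₁ : x₁ ∈ valBall w (-(p * b))) (hx₂ : x₂ ^ p - x₂ = μ ^ p * A + wittD p x₁ A) :
    x₂ ∈ valBall w (-(M + p * b)) := by
  have hp2 : (2 : ℤ) ≤ p := by exact_mod_cast hp.two_le
  have hp1 : (0 : ℤ) ≤ p - 1 := by linarith
  have hpb : p * b ≤ p * (p * b) := le_mul_of_one_le_left (by positivity) (by linarith)
  have hM : 0 < M := lt_of_le_of_lt (by positivity) hbM
  have hpbM : p * (p * (p - 1) * b) ≤ p * M := by gcongr
  have hμA : μ ^ p * A ∈ valBall w (-(p * (M + p * b))) := by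
    refine valBall_antitone w ?_ (SetLike.mul_mem_graded (SetLike.pow_mem_graded p hμ) hA)
    rw [nsmul_eq_mul]
    linarith
  refine mem_valBall_of_pow_sub_self_mem hp.two_le (by positivity) ?_
  rw [hx₂]
  exact add_mem hμA
    (valBall_antitone w (by linarith) (wittD_artinSchreier_mem_valBall hp hb.le hx₁ hA))

theorem witt_generator_pow_eq (hp : p ≠ 0) {A μ x₁ x₂ : K} (hx₁ : x₁ ^ p - x₁ = A)
    (hx₂ : x₂ ^ p - x₂ = μ ^ p * A + wittD p x₁ A) :
    (x₂ - μ * x₁) ^ p =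
      -(μ ^ p * x₁) + (x₂ + wittD p x₁ A + p * wittD p (x₂ - μ * x₁) (μ * x₁)) := by
  have hsum := add_pow_eq_sub_mul_wittD hp (x₂ - μ * x₁) (μ * x₁)
  rw [sub_add_cancel, mul_pow] at hsum
  linear_combination hx₂ - hsum - μ ^ p * hx₁

theorem addVal_witt_generator (hp : p.Prime) {A μ x₁ x₂ : K} {b e M : ℤ} (hb : 0 < b)
    (hpe : (p : K) ∈ valBall w e) (hbM : p * (p - 1) * b < M) (hbe : p * (p - 1) * b < e)
    (hA : w A = (-(p ^ 2 * b) : ℤ)) (hμ : w μ = (-M : ℤ)) (hx₁ : x₁ ^ p - x₁ = A)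
    (hx₂ : x₂ ^ p - x₂ = μ ^ p * A + wittD p x₁ A) :
    w (x₂ - μ * x₁) = (-(M + b) : ℤ) := by
  have hp2 : (2 : ℤ) ≤ p := by exact_mod_cast hp.two_le
  have hp1 : (0 : ℤ) ≤ p - 1 := by linarith
  have hpb : 0 < p * b := by positivity
  have hppb : p * b ≤ p * (p * b) := le_mul_of_one_le_left (by positivity) (by linarith)
  have hM : 0 < M := lt_of_le_of_lt (by positivity) hbM
  have hMp : M ≤ (p - 1) * M := le_mul_of_one_le_left hM.le (by linarith)
  have hpbM : p * (p * (p - 1) * b + 1) ≤ p * M := by gcongr; exact hbM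
  have hx₁w : w x₁ = (-(p * b) : ℤ) :=
    addVal_eq_of_pow_sub_self_eq hp.two_le (by linarith) (by rw [hx₁, hA]; congr 1; ring)
  have hμx₁ : μ * x₁ ∈ valBall w (-(M + p * b)) := by
    rw [mem_valBall, w.map_mul, hμ, hx₁w, neg_add, WithTop.coe_add]
  have hD := wittD_artinSchreier_mem_valBall hp hb.le (mem_valBall.2 hx₁w.ge)
    (mem_valBall.2 hA.ge)
  have hx₂mem := witt_root_mem_valBall hp hb hbM (mem_valBall.2 hA.ge) (mem_valBall.2 hμ.ge)
    (mem_valBall.2 hx₁w.ge) hx₂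
  have hDX : wittD p (x₂ - μ * x₁) (μ * x₁) ∈ valBall w (-(p * (M + p * b))) :=
    wittD_mem_valBall hp (sub_mem hx₂mem hμx₁) hμx₁ (by linarith) (by linarith)
  have hmain : w (-(μ ^ p * x₁)) = (p * -(M + b) : ℤ) := by
    rw [w.map_neg, w.map_mul, addVal_pow_eq hμ, hx₁w, ← WithTop.coe_add]
    congr 1
    ring
  have hrest : x₂ + wittD p x₁ A + p * wittD p (x₂ - μ * x₁) (μ * x₁) ∈
      valBall w (p * -(M + b) + 1) := by
    refine add_mem (add_mem ?_ ?_) ?_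
    · exact valBall_antitone w (by linarith) hx₂mem
    · exact valBall_antitone w (by linarith) hD
    · exact valBall_antitone w (by linarith) (SetLike.mul_mem_graded hpe hDX)
  refine addVal_eq_of_pow_eq hp.ne_zero ?_
  rw [witt_generator_pow_eq hp.ne_zero hx₁ hx₂, w.map_add_eq_of_lt_left, hmain]
  rw [hmain]
  exact lt_of_lt_of_le (WithTop.coe_lt_coe.2 (lt_add_one _)) hrest

theorem add_pow_prime_sub_div_mem_valBall (hp : p.Prime) {x u : K} {a e h : ℤ} (ha : 0 ≤ a)
    (hah : (p - 1) * a ≤ h) (heh : e ≤ p * h) (hpe : w (p : K) = e) (hx : x ∈ valBall w (-a))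
    (hu : u ∈ valBall w h) : ((x + u) ^ p - x ^ p) / p ∈ valBall w 0 := by
  have hp1 : (1 : ℤ) ≤ p - 1 := by have := hp.two_le; omega
  have hexpand : ((x + u) ^ p - x ^ p) / p = u ^ p / p - wittD p x u := by
    rw [wittD]
    ring
  rw [hexpand]
  have hal : a ≤ (p - 1) * a := le_mul_of_one_le_left ha hp1
  have hhl : h ≤ (p - 1) * h := le_mul_of_one_le_left (by linarith) hp1
  refine sub_mem ?_ (wittD_mem_valBall hp hx hu (by linarith) (by linarith))
  refine valBall_antitone w ?_ (div_mem_valBall (SetLike.pow_mem_graded p hu) hpe)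
  rw [nsmul_eq_mul]
  linarith

/-- Each summand is `(1 - (y (i + 1) ^ p - y i ^ p)) / p` up to a small error, so the sum
telescopes. -/
theorem sum_wittD_one_mem_valBall (hp : p.Prime) {y η : ℕ → K} {a e h : ℤ} (ha : 0 ≤ a)
    (hah : (p - 1) * a ≤ h) (hhe : h ≤ e) (heh : e ≤ p * h) (hpe : w (p : K) = e)
    (hy : ∀ i, y i ∈ valBall w (-a)) (hη : ∀ i, η i ∈ valBall w h)
    (hstep : ∀ i, y (i + 1) = y i + 1 + η i) :
    ∑ i ∈ Finset.range p, wittD p (y i) 1 ∈ valBall w 0 := by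
  have hpK : (p : K) ≠ 0 := Nat.cast_ne_zero.2 hp.ne_zero
  have hterm (i : ℕ) : wittD p (y i) 1 = 1 / p - (y (i + 1) ^ p / p - y i ^ p / p) +
      ((y i + 1 + η i) ^ p - (y i + 1) ^ p) / p := by
    rw [hstep, wittD]
    ring
  have hlast : y p = y 0 + (p + ∑ i ∈ Finset.range p, η i) := by
    have hsum := Finset.sum_range_sub y p
    simp only [hstep, add_assoc, add_sub_cancel_left, Finset.sum_add_distrib, Finset.sum_const,
      Finset.card_range, nsmul_eq_mul, mul_one] at hsum
    rw [hsum]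
    ring
  have htelescope : ∑ i ∈ Finset.range p, wittD p (y i) 1 =
      1 - ((y 0 + (p + ∑ i ∈ Finset.range p, η i)) ^ p - y 0 ^ p) / p +
        ∑ i ∈ Finset.range p, ((y i + 1 + η i) ^ p - (y i + 1) ^ p) / p := by
    simp only [hterm, Finset.sum_add_distrib, Finset.sum_sub_distrib, Finset.sum_const,
      Finset.card_range, nsmul_eq_mul, mul_one_div_cancel hpK, ← hlast]
    rw [← Finset.sum_sub_distrib, Finset.sum_range_sub fun i => y i ^ p / (p : K), sub_div]
  have hquot {x u : K} (hx : x ∈ valBall w (-a)) (hu : u ∈ valBall w h) :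
      ((x + u) ^ p - x ^ p) / p ∈ valBall w 0 :=
    add_pow_prime_sub_div_mem_valBall hp ha hah heh hpe hx hu
  have hone : (1 : K) ∈ valBall w 0 := SetLike.one_mem_graded _
  rw [htelescope]
  refine add_mem (sub_mem hone (hquot (hy 0) (add_mem ?_ (sum_mem fun i _ => hη i))))
    (sum_mem fun i _ => hquot (add_mem (hy i) (valBall_antitone w (by omega) hone)) (hη i))
  exact valBall_antitone w hhe (mem_valBall.2 hpe.ge)

end Witt

section Shift

variable {F K : Type*} [Field F] [Field K] [Algebra F K] {w : AddValuation K (WithTop ℤ)}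

/-- The `F`-linear operators on `K` that raise the valuation of every element by at least `g`. -/
def valShift (F : Type*) {K : Type*} [Field F] [Field K] [Algebra F K]
    (w : AddValuation K (WithTop ℤ)) (g : ℤ) : AddSubgroup (Module.End F K) where
  carrier := {T | ∀ x, w x + g ≤ w (T x)}
  zero_mem' x := by simp
  add_mem' hS hT x := w.map_le_add (hS x) (hT x)
  neg_mem' hT x := by simpa using hT x

theorem valShift_antitone (F : Type*) {K : Type*} [Field F] [Field K] [Algebra F K]
    (w : AddValuation K (WithTop ℤ)) : Antitone (valShift F w) :=
  fun _ _ hgh _ hT x => (add_le_add_right (WithTop.coe_le_coe.2 hgh) (w x)).trans (hT x)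

instance : SetLike.GradedMonoid (valShift F w) where
  one_mem x := by simp
  mul_mem g h S T hS hT x := by
    rw [Module.End.mul_apply, add_comm g, WithTop.coe_add, ← add_assoc]
    exact (add_le_add (hT x) le_rfl).trans (hS (T x))

theorem apply_mem_valBall {g n : ℤ} {T : Module.End F K} {x : K} (hT : T ∈ valShift F w g)
    (hx : x ∈ valBall w n) : T x ∈ valBall w (n + g) := by
  rw [mem_valBall, WithTop.coe_add]
  exact (add_le_add hx le_rfl).trans (hT x)

theorem smul_mem_valShift {c : F} {k g : ℤ} {T : Module.End F K}
    (hc : algebraMap F K c ∈ valBall w k) (hT : T ∈ valShift F w g) :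
    c • T ∈ valShift F w (k + g) := by
  intro x
  rw [LinearMap.smul_apply, Algebra.smul_def, w.map_mul, WithTop.coe_add, add_left_comm]
  exact add_le_add hc (hT x)

theorem natCast_mem_valShift {n : ℕ} {k : ℤ} (hn : (n : K) ∈ valBall w k) :
    (n : Module.End F K) ∈ valShift F w k := by
  intro x
  rw [Module.End.natCast_apply, nsmul_eq_mul, w.map_mul, add_comm]
  exact add_le_add_left hn _

section PowerBasis

variable {N : ℕ} {X : K} {n : ℤ}

theorem addVal_sum_smul_pow (hram : ∀ c : F, c ≠ 0 → ∃ k : ℤ, w (algebraMap F K c) = (N * k : ℤ))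
    (hX : w X = n) (hnN : IsCoprime (N : ℤ) n) (c : Fin N → F) :
    w (∑ i, c i • X ^ (i : ℕ)) = Finset.univ.inf fun i => w (c i • X ^ (i : ℕ)) := by
  refine addVal_sum_eq_inf fun i _ j _ hij heq => by_contra fun hi => ?_
  have hval {l : Fin N} (hl : c l ≠ 0) :
      ∃ k : ℤ, w (c l • X ^ (l : ℕ)) = (N * k + l * n : ℤ) := by
    obtain ⟨k, hk⟩ := hram (c l) hl
    refine ⟨k, ?_⟩
    rw [Algebra.smul_def, w.map_mul, hk, addVal_pow_eq hX, WithTop.coe_add]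
  have hj : c j • X ^ (j : ℕ) ≠ 0 := by rwa [← w.ne_top_iff, ← heq, w.ne_top_iff]
  obtain ⟨k, hk⟩ := hval (left_ne_zero_of_smul hi)
  obtain ⟨l, hl⟩ := hval (left_ne_zero_of_smul hj)
  rw [hk, hl, WithTop.coe_inj] at heq
  have hdvd : (N : ℤ) ∣ i - j :=
    hnN.dvd_of_dvd_mul_right ⟨l - k, by linear_combination heq⟩
  have habs := Int.eq_zero_of_abs_lt_dvd hdvd (by rw [abs_lt]; omega)
  exact hij (Fin.ext (by omega))

theorem linearIndependent_pow_of_isCoprime_addVal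
    (hram : ∀ c : F, c ≠ 0 → ∃ k : ℤ, w (algebraMap F K c) = (N * k : ℤ)) (hX : w X = n)
    (hnN : IsCoprime (N : ℤ) n) : LinearIndependent F fun i : Fin N => X ^ (i : ℕ) := by
  refine Fintype.linearIndependent_iff.2 fun c hc i => ?_
  have htop := addVal_sum_smul_pow hram hX hnN c
  rw [hc, w.map_zero, eq_comm, Finset.inf_eq_top_iff] at htop
  have hX0 : X ≠ 0 := w.ne_top_iff.1 (by simp [hX])
  exact (smul_eq_zero.1 (w.top_iff.1 (htop i (Finset.mem_univ i)))).resolve_right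
    (pow_ne_zero _ hX0)

/-- Since `w X` is prime to the ramification index, the terms of `∑ cᵢ X ^ i` have distinct
valuations, so that it suffices to test an operator on the powers of `X`. -/
theorem mem_valShift_of_forall_pow [FiniteDimensional F K] (hN : Module.finrank F K = N)
    (hram : ∀ c : F, c ≠ 0 → ∃ k : ℤ, w (algebraMap F K c) = (N * k : ℤ)) (hX : w X = n)
    (hnN : IsCoprime (N : ℤ) n) {g : ℤ} {T : Module.End F K}
    (hT : ∀ i : ℕ, w (X ^ i) + g ≤ w (T (X ^ i))) : T ∈ valShift F w g := by
  have : Nonempty (Fin N) := ⟨0, hN ▸ Module.finrank_pos⟩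
  intro x
  have hspan := (linearIndependent_pow_of_isCoprime_addVal hram hX hnN
    ).span_eq_top_of_card_eq_finrank' (by rw [Fintype.card_fin, hN])
  obtain ⟨c, rfl⟩ := (Submodule.mem_span_range_iff_exists_fun F).1
    (hspan ▸ Submodule.mem_top : x ∈ _)
  rw [addVal_sum_smul_pow hram hX hnN, map_sum]
  refine w.map_le_sum fun i _ => ?_
  rw [map_smul, Algebra.smul_def, w.map_mul]
  calc Finset.univ.inf (fun i => w (c i • X ^ (i : ℕ))) + (g : WithTop ℤ)
      ≤ w (c i • X ^ (i : ℕ)) + g := by gcongr; exact Finset.inf_le (Finset.mem_univ i)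
    _ = w (algebraMap F K (c i)) + (w (X ^ (i : ℕ)) + g) := by
        rw [Algebra.smul_def, w.map_mul, add_assoc]
    _ ≤ w (algebraMap F K (c i)) + w (T (X ^ (i : ℕ))) := by gcongr; exact hT i

end PowerBasis

end Shift

theorem add_pow_sub_pow_mem_valBall {K : Type*} [Field K] {w : AddValuation K (WithTop ℤ)}
    {x u : K} {a : ℤ} (ha : 0 ≤ a) (hx : x ∈ valBall w (-a)) (hu : u ∈ valBall w 0) (n : ℕ) :
    (x + u) ^ n - x ^ n ∈ valBall w (-(n * a) + a) := by
  have hxu : x + u ∈ valBall w (-a) := add_mem hx (valBall_antitone w (by omega) hu)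
  rw [← geom_sum₂_mul, add_sub_cancel_left, Finset.sum_mul]
  refine sum_mem fun i hi => valBall_antitone w ?_ (SetLike.mul_mem_graded
    (SetLike.mul_mem_graded (SetLike.pow_mem_graded i hxu)
      (SetLike.pow_mem_graded (n - 1 - i) hx)) hu)
  have hsum : (i : ℤ) + (n - 1 - i : ℕ) = n - 1 := by
    have := Finset.mem_range.1 hi
    omega
  simp only [nsmul_eq_mul]
  linear_combination a * hsum

section Generator

variable {F K : Type*} [Field F] [Field K] [Algebra F K]
  {w : AddValuation K (WithTop ℤ)} {σ : K ≃ₐ[F] K} {p : ℕ} {x₁ x₂ ε δ : K} {μ : F}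

theorem pow_apply_sub_self (σ : K ≃ₐ[F] K) (n : ℕ) (x : K) :
    (σ ^ n) x - x = ∑ i ∈ Finset.range n, (σ ^ i) (σ x - x) := by
  simpa [pow_succ] using (Finset.sum_range_sub (fun i => (σ ^ i) x) n).symm

theorem pow_apply_mem_valBall (hσ : σ.toLinearMap ∈ valShift F w 0) {n : ℤ} {x : K}
    (hx : x ∈ valBall w n) (i : ℕ) : (σ ^ i) x ∈ valBall w n := by
  have hpow := SetLike.pow_mem_graded i hσ
  rw [← AlgEquiv.pow_toLinearMap] at hpow
  simpa using apply_mem_valBall hpow hx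

theorem map_wittD (σ : K ≃ₐ[F] K) (x y : K) : σ (wittD p x y) = wittD p (σ x) (σ y) := by
  simp [wittD]

theorem apply_generator_sub_eq (hσx₁ : σ x₁ = x₁ + 1 + ε) (hσx₂ : σ x₂ = x₂ + wittD p x₁ 1 + δ) :
    σ (x₂ - algebraMap F K μ * x₁) - (x₂ - algebraMap F K μ * x₁) =
      wittD p x₁ 1 + δ - algebraMap F K μ * (1 + ε) := by
  rw [map_sub, map_mul, AlgEquiv.commutes, hσx₁, hσx₂]
  ring

theorem pow_prime_apply_generator_sub_mem_valBall [CharZero K] (hp : p.Prime)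
    (hσ : σ.toLinearMap ∈ valShift F w 0) {a e h M : ℤ} (ha : 0 ≤ a) (hah : (p - 1) * a ≤ h)
    (hhe : h ≤ e) (heh : e ≤ p * h) (hMh : M ≤ h) (hpe : w (p : K) = e)
    (hμ : algebraMap F K μ ∈ valBall w (-M)) (hx₁ : x₁ ∈ valBall w (-a)) (hε : ε ∈ valBall w h)
    (hδ : δ ∈ valBall w 0) (hσx₁ : σ x₁ = x₁ + 1 + ε) (hσx₂ : σ x₂ = x₂ + wittD p x₁ 1 + δ) :
    (σ ^ p) (x₂ - algebraMap F K μ * x₁) - (x₂ - algebraMap F K μ * x₁) ∈ valBall w 0 := by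
  have hsum : (σ ^ p) (x₂ - algebraMap F K μ * x₁) - (x₂ - algebraMap F K μ * x₁) =
      ∑ i ∈ Finset.range p, wittD p ((σ ^ i) x₁) 1 + ∑ i ∈ Finset.range p, (σ ^ i) δ -
        algebraMap F K μ * (p + ∑ i ∈ Finset.range p, (σ ^ i) ε) := by
    rw [pow_apply_sub_self, apply_generator_sub_eq hσx₁ hσx₂]
    simp only [map_sub, map_add, map_mul, AlgEquiv.commutes, map_wittD, map_one, mul_add, mul_one,
      Finset.sum_add_distrib, Finset.sum_sub_distrib, ← Finset.mul_sum, Finset.sum_const,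
      Finset.card_range, nsmul_eq_mul]
    ring
  rw [hsum]
  refine sub_mem (add_mem ?_ (sum_mem fun i _ => pow_apply_mem_valBall hσ hδ i)) ?_
  · refine sum_wittD_one_mem_valBall hp ha hah hhe heh hpe (pow_apply_mem_valBall hσ hx₁)
      (pow_apply_mem_valBall hσ hε) fun i => ?_
    rw [pow_succ, AlgEquiv.mul_apply, hσx₁, map_add, map_add, map_one]
  · refine valBall_antitone w (by omega) (SetLike.mul_mem_graded hμ (add_mem
      (valBall_antitone w hhe (mem_valBall.2 hpe.ge))
      (sum_mem fun i _ => pow_apply_mem_valBall hσ hε i)))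

end Generator

section GeneratorShift

variable {F K : Type*} [Field F] [Field K] [Algebra F K] [FiniteDimensional F K]
  {w : AddValuation K (WithTop ℤ)} {N : ℕ} {X : K}

theorem toLinearMap_mem_valShift_zero (hN : Module.finrank F K = N)
    (hram : ∀ c : F, c ≠ 0 → ∃ k : ℤ, w (algebraMap F K c) = (N * k : ℤ)) {n : ℤ} (hX : w X = n)
    (hnN : IsCoprime (N : ℤ) n) {τ : K ≃ₐ[F] K} (hτ : τ X - X ∈ valBall w n) :
    τ.toLinearMap ∈ valShift F w 0 := by
  have hτX : τ X ∈ valBall w n := by simpa using add_mem hτ (mem_valBall.2 hX.ge)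
  refine mem_valShift_of_forall_pow hN hram hX hnN fun i => ?_
  rw [AlgEquiv.toLinearMap_apply, map_pow τ, w.map_pow, w.map_pow, hX, WithTop.coe_zero, add_zero]
  exact nsmul_le_nsmul_right hτX i

theorem toLinearMap_sub_one_mem_valShift (hN : Module.finrank F K = N)
    (hram : ∀ c : F, c ≠ 0 → ∃ k : ℤ, w (algebraMap F K c) = (N * k : ℤ)) {a : ℤ} (ha : 0 ≤ a)
    (hX : w X = (-a : ℤ)) (haN : IsCoprime (N : ℤ) (-a)) {τ : K ≃ₐ[F] K}
    (hτ : τ X - X ∈ valBall w 0) : τ.toLinearMap - 1 ∈ valShift F w a := by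
  refine mem_valShift_of_forall_pow hN hram hX haN fun i => ?_
  have hpow := add_pow_sub_pow_mem_valBall ha (mem_valBall.2 hX.ge) hτ i
  rw [add_sub_cancel, mem_valBall, WithTop.coe_add, ← mul_neg, ← addVal_pow_eq hX] at hpow
  simpa using hpow

theorem generator_mem_valShift [CharZero K] {p : ℕ} (hp : p.Prime)
    (hN : Module.finrank F K = p ^ 2)
    (hram : ∀ c : F, c ≠ 0 → ∃ k : ℤ, w (algebraMap F K c) = ((p ^ 2 : ℕ) * k : ℤ))
    {A x₁ x₂ ε δ : K} {μ : F} {σ : K ≃ₐ[F] K} {b e M : ℤ} (hb : 0 < b)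
    (hcop : IsCoprime ((p ^ 2 : ℕ) : ℤ) (-(M + b))) (hbM : ((p : ℤ) ^ 2 - 1) * b < M)
    (hMe : (p - 1) * M + (2 * p * (p - 1) + 1) * b < e) (hpe : w (p : K) = e)
    (hA : w A = (-(p ^ 2 * b) : ℤ)) (hμ : w (algebraMap F K μ) = (-M : ℤ))
    (hx₁ : x₁ ^ p - x₁ = A) (hx₂ : x₂ ^ p - x₂ = algebraMap F K μ ^ p * A + wittD p x₁ A)
    (hσx₁ : σ x₁ = x₁ + 1 + ε) (hε : ε ∈ valBall w (e - p * (p - 1) * b))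
    (hσx₂ : σ x₂ = x₂ + wittD p x₁ 1 + δ) (hδ : δ ∈ valBall w 0) :
    σ.toLinearMap ∈ valShift F w 0 ∧ (σ ^ p).toLinearMap - 1 ∈ valShift F w (M + b) := by
  have hp1 : (1 : ℤ) ≤ p - 1 := by have := hp.two_le; omega
  have hb' : b ≤ (p - 1) * b := le_mul_of_one_le_left hb.le hp1
  have hpb : 0 ≤ p * b := by positivity
  have hpb' : p * b ≤ p * ((p - 1) * b) := by gcongr
  have hM : M ≤ (p - 1) * M := le_mul_of_one_le_left (by linarith) hp1
  have hXw := addVal_witt_generator hp hb (mem_valBall.2 hpe.ge) (by linarith) (by linarith) hA hμ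
    hx₁ hx₂
  have hx₁w : w x₁ = (-(p * b) : ℤ) :=
    addVal_eq_of_pow_sub_self_eq hp.two_le (by linarith) (by rw [hx₁, hA]; congr 1; ring)
  have hD : wittD p x₁ 1 ∈ valBall w (-(p * ((p - 1) * b))) :=
    wittD_mem_valBall hp (mem_valBall.2 hx₁w.ge) (SetLike.one_mem_graded _) (by linarith)
      (by linarith)
  have hμε : algebraMap F K μ * (1 + ε) ∈ valBall w (-M) := by
    simpa using SetLike.mul_mem_graded (mem_valBall.2 hμ.ge) (add_mem
      (SetLike.one_mem_graded (valBall w)) (valBall_antitone w (by linarith) hε))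
  have hσ : σ.toLinearMap ∈ valShift F w 0 := by
    refine toLinearMap_mem_valShift_zero hN hram hXw hcop ?_
    rw [apply_generator_sub_eq hσx₁ hσx₂]
    exact sub_mem (add_mem (valBall_antitone w (by linarith) hD)
      (valBall_antitone w (by linarith) hδ)) (valBall_antitone w (by linarith) hμε)
  refine ⟨hσ, toLinearMap_sub_one_mem_valShift hN hram (by linarith) hXw hcop ?_⟩
  exact pow_prime_apply_generator_sub_mem_valBall hp hσ (a := p * b) hpb (by linarith)
    (by linarith) (by nlinarith) (by linarith) hpe (mem_valBall.2 hμ.ge) (mem_valBall.2 hx₁w.ge) hε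
    hδ hσx₁ hσx₂

end GeneratorShift

section TruncatedBinomial

variable {F A : Type*} [Field F] [Ring A] [Algebra F A] {p : ℕ}

/-- Byott and Elder's truncated exponentiation `(1 + T)^[μ]`: the binomial series for
`(1 + T) ^ μ` truncated below degree `p`, which makes sense for an exponent `μ` in the base field as
long as `(p - 1)!` is invertible there. -/
def truncatedBinomial (p : ℕ) (μ : F) (T : A) : A :=
  ∑ i ∈ Finset.range p, ((∏ k ∈ Finset.range i, (μ - k)) / (i.factorial : F)) • T ^ i

theorem commute_truncatedBinomial {S T : A} (hST : Commute S T) (μ : F) :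
    Commute S (truncatedBinomial p μ T) :=
  Commute.sum_right _ _ _ fun i _ => (hST.pow_right i).smul_right _

end TruncatedBinomial

theorem prod_sub_div_factorial_mem_valBall {K : Type*} [Field K] {w : AddValuation K (WithTop ℤ)}
    {p i : ℕ} (hp : p.Prime) (hi : i < p) (hwp : 0 < w (p : K)) {z : K} {M : ℤ} (hM : 0 ≤ M)
    (hz : z ∈ valBall w (-M)) :
    (∏ k ∈ Finset.range i, (z - k)) / (i.factorial : K) ∈ valBall w (-(i * M)) := by
  have hfactorial : w (i.factorial : K) = (0 : ℤ) :=
    addVal_natCast_eq_zero_of_coprime hwp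
      (hp.coprime_iff_not_dvd.2 fun h => hi.not_ge (hp.dvd_factorial.1 h))
  have hprod := SetLike.prod_mem_graded (valBall w) (fun _ => -M) (fun k : ℕ => z - k)
    (F := Finset.range i) fun k _ =>
      sub_mem hz (valBall_antitone w (by omega) (SetLike.natCast_mem_graded _ k))
  simpa using div_mem_valBall hprod hfactorial

section ScaffoldOperators

variable {F K : Type*} [Field F] [Field K] [Algebra F K] {w : AddValuation K (WithTop ℤ)} {p : ℕ}

theorem exists_truncatedBinomial_eq (hp : p.Prime) (hwp : 0 < w (p : K)) {μ : F} {M : ℤ}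
    (hM : 0 ≤ M) (hμ : algebraMap F K μ ∈ valBall w (-M)) {T : Module.End F K}
    (hT : T ∈ valShift F w M) :
    ∃ H ∈ valShift F w (-M),
      truncatedBinomial p μ T = 1 + T * H ∧ ∀ S, Commute S T → Commute S H := by
  set c : ℕ → F := fun i => (∏ k ∈ Finset.range i, (μ - k)) / (i.factorial : F) with hc
  have hc_mem {i : ℕ} (hi : i < p) : algebraMap F K (c i) ∈ valBall w (-(i * M)) := by
    simpa [hc] using prod_sub_div_factorial_mem_valBall hp hi hwp hM hμ
  refine ⟨∑ i ∈ Finset.range (p - 1), c (i + 1) • T ^ i, sum_mem fun i hi => ?_, ?_,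
    fun S hST => Commute.sum_right _ _ _ fun i _ => (hST.pow_right i).smul_right _⟩
  · have hi : i + 1 < p := by have := Finset.mem_range.1 hi; omega
    refine valShift_antitone F w ?_
      (smul_mem_valShift (hc_mem hi) (SetLike.pow_mem_graded i hT))
    rw [nsmul_eq_mul]
    push_cast
    linarith
  · obtain ⟨n, rfl⟩ := Nat.exists_eq_succ_of_ne_zero hp.ne_zero
    rw [truncatedBinomial, Finset.sum_range_succ', Finset.mul_sum, add_comm]
    simp [hc, pow_succ']

theorem truncatedBinomial_twist_mem_valShift (hp : p.Prime) {b e M : ℤ} (hb : 0 ≤ b) (hM : 0 ≤ M)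
    (hbM : b ≤ (p - 1) * M) (he : 0 < e) (hpe : w (p : K) = e) {μ : F}
    (hμ : algebraMap F K μ ∈ valBall w (-M)) {σ : Module.End F K} (hσ : σ ∈ valShift F w 0)
    (hσp : σ ^ p ^ 2 = 1) (hΨ₂ : σ ^ p - 1 ∈ valShift F w (M + b)) :
    σ * truncatedBinomial p μ (σ ^ p - 1) - 1 ∈ valShift F w 0 ∧
      (σ * truncatedBinomial p μ (σ ^ p - 1) - 1) ^ p - (σ ^ p - 1) ∈
        valShift F w (e + b - (p - 1) * M) := by
  have hwp : 0 < w (p : K) := by rw [hpe]; exact_mod_cast he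
  obtain ⟨H, hH, hsum, hcomm⟩ := exists_truncatedBinomial_eq hp hwp hM hμ
    (valShift_antitone F w (by omega) hΨ₂)
  rw [hsum]
  exact twisted_sub_one_pow_prime_sub_mem (valShift_antitone F w) hp
    (natCast_mem_valShift (mem_valBall.2 hpe.ge)) hb hM hbM hσ hσp hΨ₂ hH
    (hcomm σ (((Commute.refl σ).pow_right p).sub_right (Commute.one_right σ)))

theorem scaffold_operators_mem_valShift [FiniteDimensional F K] [IsGalois F K] [CharZero K]
    (hp : p.Prime) (hN : Module.finrank F K = p ^ 2)
    (hram : ∀ c : F, c ≠ 0 → ∃ k : ℤ, w (algebraMap F K c) = ((p ^ 2 : ℕ) * k : ℤ))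
    {A x₁ x₂ ε δ : K} {μ : F} {σ : K ≃ₐ[F] K} {b e m : ℤ} (hb : 0 < b) (hpb : ¬ (p : ℤ) ∣ b)
    (hbm : ((p : ℤ) ^ 2 - 1) * b < p ^ 2 * m)
    (hme : (p - 1) * (p ^ 2 * m) + (2 * p * (p - 1) + 1) * b < e) (hpe : w (p : K) = e)
    (hA : w A = (-(p ^ 2 * b) : ℤ)) (hμ : w (algebraMap F K μ) = (-(p ^ 2 * m) : ℤ))
    (hx₁ : x₁ ^ p - x₁ = A) (hx₂ : x₂ ^ p - x₂ = algebraMap F K μ ^ p * A + wittD p x₁ A)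
    (hσx₁ : σ x₁ = x₁ + 1 + ε) (hε : ε ∈ valBall w (e - p * (p - 1) * b))
    (hσx₂ : σ x₂ = x₂ + wittD p x₁ 1 + δ) (hδ : δ ∈ valBall w 0) {Ψ₁ Ψ₂ : Module.End F K}
    (hΨ₂ : Ψ₂ = (σ ^ p).toLinearMap - 1)
    (hΨ₁ : Ψ₁ = σ.toLinearMap * truncatedBinomial p μ Ψ₂ - 1) :
    Ψ₂ ∈ valShift F w (p ^ 2 * m + b) ∧ Ψ₁ ∈ valShift F w 0 ∧
      Ψ₁ ^ p - Ψ₂ ∈ valShift F w (e + b - (p - 1) * (p ^ 2 * m)) ∧ Commute Ψ₁ Ψ₂ := by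
  have hp1 : (1 : ℤ) ≤ p - 1 := by have := hp.two_le; omega
  have hbp : b ≤ (p ^ 2 - 1) * b := le_mul_of_one_le_left hb.le (by nlinarith)
  have hM : p ^ 2 * m ≤ (p - 1) * (p ^ 2 * m) := le_mul_of_one_le_left (by linarith) hp1
  have hcop : IsCoprime ((p ^ 2 : ℕ) : ℤ) (-(p ^ 2 * m + b)) := by
    rw [Nat.cast_pow, IsCoprime.neg_right_iff, IsCoprime.mul_add_left_right_iff]
    exact ((Nat.prime_iff_prime_int.1 hp).coprime_iff_not_dvd.2 hpb).pow_left
  obtain ⟨hσ, hσp⟩ := generator_mem_valShift hp hN hram hb hcop hbm hme hpe hA hμ hx₁ hx₂ hσx₁ hε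
    hσx₂ hδ
  have hσ_order : σ.toLinearMap ^ p ^ 2 = 1 := by
    rw [← AlgEquiv.pow_toLinearMap, ← hN, ← IsGalois.card_aut_eq_finrank F K, pow_card_eq_one']
    rfl
  have hσΨ₂ : Commute σ.toLinearMap Ψ₂ := by
    rw [hΨ₂, AlgEquiv.pow_toLinearMap]
    exact ((Commute.refl _).pow_right p).sub_right (Commute.one_right _)
  have hΨ₁Ψ₂ : Commute Ψ₁ Ψ₂ := hΨ₁ ▸
    ((hσΨ₂.mul_left (commute_truncatedBinomial (Commute.refl Ψ₂) μ).symm).sub_left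
      (Commute.one_left Ψ₂))
  rw [AlgEquiv.pow_toLinearMap] at hΨ₂ hσp
  have hpb_nonneg : 0 ≤ 2 * p * (p - 1) * b :=
    mul_nonneg (mul_nonneg (by positivity) (by linarith)) hb.le
  obtain ⟨hΨ₁_mem, hdiff⟩ := truncatedBinomial_twist_mem_valShift hp hb.le (by linarith)
    (by linarith) (by linarith) hpe (mem_valBall.2 hμ.ge) hσ hσ_order hσp
  rw [← hΨ₂] at hσp hΨ₁_mem hdiff
  rw [← hΨ₁] at hΨ₁_mem hdiff
  exact ⟨hσp, hΨ₁_mem, hdiff, hΨ₁Ψ₂⟩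

end ScaffoldOperators

section Congruence

variable {F K : Type*} [Field F] [Field K] [Algebra F K] {w : AddValuation K (WithTop ℤ)} {p : ℕ}
  {S T : Module.End F K} {c π : F} {ρ : K} {d : ℕ → ℤ} {j r : ℕ}

theorem rescaled_apply_sub_eq {A B C : Module.End F K} (hπ : π ≠ 0) (l m : ℤ) :
    algebraMap F K c * A (algebraMap F K (π ^ (-m)) * B ρ) -
        algebraMap F K (c * π ^ (l - m)) * (algebraMap F K (π ^ (-l)) * C ρ) =
      algebraMap F K (c * π ^ (-m)) * (A * B - C) ρ := by
  have hπ_pow : π ^ (l - m) * π ^ (-l) = π ^ (-m) := by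
    rw [← zpow_add₀ hπ]
    congr 1
    ring
  rw [← Algebra.smul_def (π ^ (-m)), map_smul, Algebra.smul_def, ← mul_assoc, ← mul_assoc,
    ← map_mul, ← map_mul, mul_assoc c, hπ_pow, LinearMap.sub_apply, Module.End.mul_apply, mul_sub]

theorem scaffold_eq_of_no_carry (hπ : π ≠ 0) (hTS : Commute T S) (hjr : j % p + r % p < p) :
    algebraMap F K c *
        digitMonomial p S T j (algebraMap F K (π ^ (-d r)) * digitMonomial p S T r ρ) =
      algebraMap F K (c * π ^ (d (j + r) - d r)) *
        (algebraMap F K (π ^ (-d (j + r))) * digitMonomial p S T (j + r) ρ) := by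
  rw [← sub_eq_zero, rescaled_apply_sub_eq hπ, digitMonomial_mul_of_no_carry hTS hjr, sub_self,
    LinearMap.zero_apply, mul_zero]

theorem algebraMap_zpow_mul_mem_valBall {x : K} {k n q : ℤ} (hπ : w (algebraMap F K π) = q)
    (hx : x ∈ valBall w n) : algebraMap F K (π ^ k) * x ∈ valBall w (k * q + n) := by
  rw [map_zpow₀]
  exact SetLike.mul_mem_graded (mem_valBall.2 (addVal_zpow_eq hπ k).ge) hx

theorem algebraMap_zpow_fdiv_mul_mem_valBall {x : K} {n q : ℤ} (hq : 0 ≤ q)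
    (hπ : w (algebraMap F K π) = q) (hx : x ∈ valBall w (n % q)) :
    algebraMap F K (π ^ n.fdiv q) * x ∈ valBall w n := by
  have hmem := algebraMap_zpow_mul_mem_valBall (k := n.fdiv q) hπ hx
  rwa [← Int.fmod_eq_emod_of_nonneg n hq, Int.fdiv_mul_add_fmod] at hmem

theorem scaffold_sub_mem_valBall (hp : 0 < p) (hπ : w (algebraMap F K π) = (p ^ 2 : ℤ))
    (hTS : Commute T S) {b₁ b₂ e m : ℤ} (hb₁ : 0 ≤ b₁) (hb₂ : b₂ = p ^ 2 * m + b₁)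
    (hb : p ^ 2 * b₁ ≤ b₂) (hS : S ∈ valShift F w b₂) (hT : T ∈ valShift F w 0)
    (hTpS : T ^ p - S ∈ valShift F w (e + b₁ - (p - 1) * (p ^ 2 * m))) (hρ : ρ ∈ valBall w b₂)
    (hd : ∀ a < p ^ 2,
      d a = Int.fdiv ((1 + (a / p : ℕ)) * b₂ + (a % p : ℕ) * p * b₁) (p ^ 2))
    (hj : j < p ^ 2) (hr : r < p ^ 2) (hc : algebraMap F K c ∈ valBall w (p ^ 2 * (d 0 - d j))) :
    algebraMap F K c *
          digitMonomial p S T j (algebraMap F K (π ^ (-d r)) * digitMonomial p S T r ρ) -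
        algebraMap F K (c * π ^ (d (j + r) - d r)) *
          (algebraMap F K (π ^ (-d (j + r))) * digitMonomial p S T (j + r) ρ) ∈
      valBall w (e - p * b₂ - (p ^ 2 - p + 1) * b₁) := by
  subst hb₂
  have hp_sq : 0 < (p : ℤ) ^ 2 := by positivity
  have hπ0 : π ≠ 0 := by
    rintro rfl
    rw [map_zero, w.map_zero] at hπ
    exact WithTop.top_ne_coe hπ
  rcases lt_or_ge (j % p + r % p) p with hno_carry | hcarry
  · rw [scaffold_eq_of_no_carry hπ0 hTS hno_carry, sub_self]
    exact zero_mem _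
  rw [rescaled_apply_sub_eq hπ0, map_mul, mul_assoc]
  refine valBall_antitone w ?_ (SetLike.mul_mem_graded hc (algebraMap_zpow_mul_mem_valBall hπ
    (apply_mem_valBall (digitMonomial_mul_sub_mem hp hTS hS hT hTpS hcarry) hρ)))
  have hd_le {a : ℕ} (ha : a < p ^ 2) :
      p ^ 2 * d a ≤ (1 + (a / p : ℕ)) * (p ^ 2 * m + b₁) + (a % p : ℕ) * p * b₁ := by
    rw [hd a ha]
    exact Int.mul_fdiv_self_le hp_sq
  have hm_le : p ^ 2 * m ≤ p ^ 2 * d 0 := by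
    rw [hd 0 (pow_pos hp 2), Int.fdiv_eq_ediv_of_nonneg _ hp_sq.le]
    gcongr
    exact Int.le_ediv_of_mul_le hp_sq (by simpa [mul_comm] using hb₁)
  have hdigits : ((j % p : ℕ) : ℤ) + (r % p : ℕ) ≤ 2 * p - 2 := by
    have := Nat.mod_lt j hp
    have := Nat.mod_lt r hp
    omega
  have hpb₁ : 0 ≤ p * b₁ := by positivity
  have hdigits_mul := mul_le_mul_of_nonneg_right hdigits hpb₁
  rw [Nat.cast_add]
  linarith [hd_le hj, hd_le hr]

end Congruence

namespace IsDiscVal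

variable {K : Type*} [Field K] {v : K → ℤ}

open Classical in
/-- The valuation `v` with the value `v 0 = ∞` restored. -/
noncomputable def addValuation (hv : IsDiscVal v) : AddValuation K (WithTop ℤ) :=
  AddValuation.of (fun x => if x = 0 then ⊤ else (v x : WithTop ℤ)) (by simp)
    (by simp [hv.map_one])
    (fun x y => by
      by_cases hx : x = 0
      · simp [hx]
      by_cases hy : y = 0
      · simp [hy]
      by_cases hxy : x + y = 0
      · simp [hxy]
      simpa [hx, hy, hxy] using hv.min_le_add x y hx hy hxy)
    (fun x y => by
      by_cases hx : x = 0
      · simp [hx]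
      by_cases hy : y = 0
      · simp [hy]
      simp [hx, hy, hv.map_mul x y hx hy])

theorem addValuation_of_ne_zero (hv : IsDiscVal v) {x : K} (hx : x ≠ 0) :
    hv.addValuation x = v x := by
  simp [addValuation, hx]

theorem mem_valBall_addValuation_iff (hv : IsDiscVal v) {x : K} {n : ℤ} :
    x ∈ valBall hv.addValuation n ↔ x = 0 ∨ n ≤ v x := by
  rcases eq_or_ne x 0 with rfl | hx
  · simp [zero_mem]
  · simp [mem_valBall, hv.addValuation_of_ne_zero hx, hx]

variable {F : Type*} [Field F] [Algebra F K] {v₀ : F → ℤ} {q : ℤ}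

theorem addValuation_algebraMap (hv : IsDiscVal v)
    (hram : ∀ x : F, x ≠ 0 → v (algebraMap F K x) = q * v₀ x) {x : F} (hx : x ≠ 0) {n : ℤ}
    (hxn : v₀ x = n) : hv.addValuation (algebraMap F K x) = (q * n : ℤ) := by
  rw [hv.addValuation_of_ne_zero (by simpa using hx), hram x hx, hxn]

theorem algebraMap_mem_valBall (hv : IsDiscVal v) (hq : 0 ≤ q)
    (hram : ∀ x : F, x ≠ 0 → v (algebraMap F K x) = q * v₀ x) {x : F} {n : ℤ}
    (hx : x = 0 ∨ n ≤ v₀ x) : algebraMap F K x ∈ valBall hv.addValuation (q * n) := by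
  rcases eq_or_ne x 0 with rfl | hx₀
  · simp [zero_mem]
  · rw [mem_valBall, hv.addValuation_algebraMap hram hx₀ rfl]
    exact_mod_cast mul_le_mul_of_nonneg_left (hx.resolve_left hx₀) hq

end IsDiscVal

/-- Proposition 4.1: if `v₀(c) ≥ d₀ − d_j` and `j + r < p²` then
`c·Ψ^{(j)}·ρ_r ≡ c·π₀^{d_{j+r}−d_r}·ρ_{j+r} mod 𝔐₂^{p²e₀ − p·b₂ − (p²−p+1)·b₁}`,
with equality when there is no carry in adding the `p`-adic expansions of
`j` and `r`. -/
theorem statement14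
    (p : ℕ) (hp : p.Prime)
    (K0 K2 : Type*) [Field K0] [Field K2] [CharZero K0] [CharZero K2]
    [Algebra K0 K2] [IsGalois K0 K2] [FiniteDimensional K0 K2]
    (hdeg : Module.finrank K0 K2 = p ^ 2)
    (hcyc : IsCyclic (K2 ≃ₐ[K0] K2))
    (v0 : K0 → ℤ) (v2 : K2 → ℤ)
    (hv0 : IsDiscVal v0) (hv2 : IsDiscVal v2)
    (e0 : ℤ) (he0 : e0 = v0 (p : K0)) (he0pos : 1 ≤ e0)
    (hram : ∀ x : K0, x ≠ 0 → v2 (algebraMap K0 K2 x) = (p : ℤ) ^ 2 * v0 x)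
    (a1 μ a2 : K0) (ha1 : a1 ≠ 0) (hμ0 : μ ≠ 0)
    (hwitt : ∀ y : K0, y ^ p - y ≠ a1)
    (hnd : ¬ ((p : ℤ) ∣ v0 a1))
    (hneg : v0 a1 < 0)
    (hbd : -((p : ℤ) * e0) < ((p : ℤ) ^ 2 - 1) * v0 a1)
    (m : ℤ) (hm : m = -v0 μ) (hmpos : 0 < m)
    (hmu1 : (p : ℤ) ^ 2 * (p - 1) * m - (2 * p * (p - 1) + 1) * v0 a1 < (p : ℤ) ^ 2 * e0)
    (hmu2 : -(((p : ℤ) ^ 2 - 1) * v0 a1) < (p : ℤ) ^ 2 * m)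
    (ha2 : a2 = μ ^ p * a1)
    (x1 x2 : K2)
    (hx1 : x1 ^ p - x1 = algebraMap K0 K2 a1)
    (hx2 : x2 ^ p - x2 = algebraMap K0 K2 a2 +
      (x1 ^ p + (algebraMap K0 K2 a1) ^ p - (x1 + algebraMap K0 K2 a1) ^ p) / (p : K2))
    (hgen : Algebra.adjoin K0 {x1, x2} = ⊤)
    (b1 b2 : ℤ) (hb1 : b1 = -v0 a1) (hb2 : b2 = (p : ℤ) ^ 2 * m + b1)
    (σ1 : K2 ≃ₐ[K0] K2) (ε δ' : K2)
    (hσ1x1 : σ1 x1 = x1 + 1 + ε)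
    (hε : ε ≠ 0) (hεv : v2 ε = (p : ℤ) ^ 2 * e0 - p * (p - 1) * b1)
    (hσ1x2 : σ1 x2 = x2 + (x1 ^ p + 1 - (x1 + 1) ^ p) / (p : K2) + δ')
    (hδ' : δ' = 0 ∨ 0 < v2 δ')
    (Ψ1 Ψ2 : Module.End K0 K2)
    (hΨ2 : Ψ2 = ((σ1 ^ p).toLinearMap : Module.End K0 K2) - 1)
    (hΨ1 : Ψ1 = (σ1.toLinearMap : Module.End K0 K2) *
      (∑ i ∈ Finset.range p,
        ((∏ k ∈ Finset.range i, (μ - (k : K0))) / (Nat.factorial i : K0)) • Ψ2 ^ i) - 1)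
    (π0 : K0) (hπ0 : π0 ≠ 0) (hπ0v : v0 π0 = 1)
    (ρ0 : K2) (hρ0 : ρ0 ≠ 0) (hρ0v : v2 ρ0 = b2 % (p : ℤ) ^ 2)
    (d : ℕ → ℤ)
    (hd : ∀ a : ℕ, a < p ^ 2 →
      d a = Int.fdiv ((1 + ((a / p : ℕ) : ℤ)) * b2 + ((a % p : ℕ) : ℤ) * (p : ℤ) * b1)
        ((p : ℤ) ^ 2))
    (Ψf : ℕ → Module.End K0 K2)
    (hΨf : ∀ a : ℕ, Ψf a = if a < p ^ 2 then Ψ2 ^ (a / p) * Ψ1 ^ (a % p) else 0)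
    (ρ : K2) (hρ : ρ = algebraMap K0 K2 (π0 ^ d 0) * ρ0)
    (ρf : ℕ → K2) (hρf : ∀ a : ℕ, ρf a = algebraMap K0 K2 (π0 ^ (-d a)) * Ψf a ρ) :
    ∀ c : K0, ∀ j r : ℕ, (c = 0 ∨ d 0 - d j ≤ v0 c) →
      j < p ^ 2 → r < p ^ 2 → j + r < p ^ 2 →
      ((algebraMap K0 K2 c * Ψf j (ρf r) -
          algebraMap K0 K2 (c * π0 ^ (d (j + r) - d r)) * ρf (j + r) = 0) ∨
        (p : ℤ) ^ 2 * e0 - p * b2 - ((p : ℤ) ^ 2 - p + 1) * b1 ≤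
          v2 (algebraMap K0 K2 c * Ψf j (ρf r) -
          algebraMap K0 K2 (c * π0 ^ (d (j + r) - d r)) * ρf (j + r))) ∧
      (j % p + r % p < p ∧ j / p + r / p < p →
        algebraMap K0 K2 c * Ψf j (ρf r) =
          algebraMap K0 K2 (c * π0 ^ (d (j + r) - d r)) * ρf (j + r)) := by
  have hp_sq : 0 < (p : ℤ) ^ 2 := pow_pos (mod_cast hp.pos) 2
  have hb1_pos : 0 < b1 := by linarith
  set w := hv2.addValuation
  have hw {x : K0} {n : ℤ} (hx : x ≠ 0) (hn : v0 x = n) :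
      w (algebraMap K0 K2 x) = (p ^ 2 * n : ℤ) := hv2.addValuation_algebraMap hram hx hn
  have hpe : w (p : K2) = (p ^ 2 * e0 : ℤ) := by
    simpa using hw (Nat.cast_ne_zero.2 hp.ne_zero) he0.symm
  have hπ : w (algebraMap K0 K2 π0) = (p ^ 2 : ℤ) := by simpa using hw hπ0 hπ0v
  obtain ⟨hΨ2_mem, hΨ1_mem, hdiff, hcomm⟩ := scaffold_operators_mem_valShift (b := b1) (m := m)
    hp hdeg (fun x hx => ⟨v0 x, by rw [hw hx rfl, Nat.cast_pow]⟩) hb1_pos (by rwa [hb1, dvd_neg])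
    (by rw [hb1]; linarith) (by rw [hb1]; linarith) hpe
    (by simpa using hw ha1 (by linarith : v0 a1 = -b1))
    (by simpa using hw hμ0 (by linarith : v0 μ = -m)) hx1
    (by rw [hx2, ha2, map_mul, map_pow, wittD]) hσ1x1
    (hv2.mem_valBall_addValuation_iff.2 (.inr hεv.ge)) (by rw [hσ1x2, wittD, one_pow])
    (hv2.mem_valBall_addValuation_iff.2 (hδ'.imp_right le_of_lt)) hΨ2 hΨ1
  rw [← hb2] at hΨ2_mem
  have hρ_mem : ρ ∈ valBall w b2 := by
    rw [hρ, hd 0 (pow_pos hp.pos 2), Nat.zero_div, Nat.zero_mod]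
    simpa using algebraMap_zpow_fdiv_mul_mem_valBall hp_sq.le hπ
      (hv2.mem_valBall_addValuation_iff.2 (.inr hρ0v.ge))
  intro c j r hc hj hr hjr
  have hΨ {a : ℕ} (ha : a < p ^ 2) : Ψf a = digitMonomial p Ψ2 Ψ1 a := (hΨf a).trans (if_pos ha)
  rw [hρf, hρf, hΨ hj, hΨ hr, hΨ hjr]
  exact ⟨hv2.mem_valBall_addValuation_iff.1 (scaffold_sub_mem_valBall hp.pos hπ hcomm hb1_pos.le
    hb2 (by rw [hb2, hb1]; linarith) hΨ2_mem hΨ1_mem hdiff hρ_mem hd hj hr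
    (hv2.algebraMap_mem_valBall hp_sq.le hram hc)),
    fun h => scaffold_eq_of_no_carry hπ0 hcomm h.1⟩
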